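/- arXiv:2106.07059 — 14 statements merged into one kernel-verified Lean document; each statement's English description precedes it below -/
import Mathlib

section
/- There exists an allocation decision p* = (p*_1, …, p*_n) with p*_j ∈ S_j for every j such that every p*_j is non-dominated in S_j and L(p*) = min over all allocation decisions p of L(p). (Lemma 2: the minimum makespan lower bound L_min is achieved by a non-dominated resource allocation.) -/
/-!
Replacing a job's allocation by one that is faster and of smaller area can only decrease the total
area and, since each chain sum is monotone in the durations, the critical path length
(`critPath_mono`); hence it does not increase `L`. It does strictly decrease the total execution
time `∑ j, t j (p j)`. So among the finitely many decisions minimizing `L`, one with the least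
total execution time has only non-dominated allocations.
-/

/-- The average area of a job with execution-time function `tj` under the allocation
`q`, on a platform with `d` resource types of total amounts `P i`:
`a(q) = (1/d) ∑_i q i * tj q / P i`. -/
noncomputable def avgArea {d : ℕ} (P : Fin d → ℕ) (tj : (Fin d → ℕ) → ℝ)
    (q : Fin d → ℕ) : ℝ :=
  (1 / (d : ℝ)) * ∑ i, (q i : ℝ) * tj q / (P i : ℝ)

/-- The critical path length: the maximum, over all chains `f` of the strict partial
order `prec`, of the total duration `∑_{j ∈ f} dur j`. -/
noncomputable def critPath {n : ℕ} (prec : Fin n → Fin n → Prop)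
    (dur : Fin n → ℝ) : ℝ :=
  sSup {c : ℝ | ∃ f : Finset (Fin n),
    (∀ a ∈ f, ∀ b ∈ f, a ≠ b → prec a b ∨ prec b a) ∧ c = ∑ j ∈ f, dur j}

/-- `L(p) = max(A(p), C(p))`, the maximum of the average total area and the critical
path length of the allocation decision `p`. -/
noncomputable def Lval {d n : ℕ} (P : Fin d → ℕ)
    (t : Fin n → (Fin d → ℕ) → ℝ) (prec : Fin n → Fin n → Prop)
    (p : Fin n → Fin d → ℕ) : ℝ :=
  max (∑ j, avgArea P (t j) (p j)) (critPath prec (fun j => t j (p j)))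

theorem critPath_mono {n : ℕ} (prec : Fin n → Fin n → Prop) {u v : Fin n → ℝ}
    (h : ∀ j, u j ≤ v j) : critPath prec u ≤ critPath prec v := by
  unfold critPath
  refine csSup_le ⟨0, ∅, by simp, by simp⟩ ?_
  rintro c ⟨f, hf, rfl⟩
  refine (Finset.sum_le_sum fun j _ => h j).trans (le_csSup ?_ ⟨f, hf, rfl⟩)
  -- There are finitely many chains, so the supremum is not a junk value.
  refine ((Set.finite_range fun f : Finset (Fin n) => ∑ j ∈ f, v j).subset ?_).bddAbove
  rintro c ⟨g, _, rfl⟩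
  exact ⟨g, rfl⟩

theorem Lval_mono {d n : ℕ} (P : Fin d → ℕ) (t : Fin n → (Fin d → ℕ) → ℝ)
    (prec : Fin n → Fin n → Prop) {p q : Fin n → Fin d → ℕ}
    (ht : ∀ j, t j (p j) ≤ t j (q j))
    (ha : ∀ j, avgArea P (t j) (p j) ≤ avgArea P (t j) (q j)) :
    Lval P t prec p ≤ Lval P t prec q :=
  max_le_max (Finset.sum_le_sum fun j _ => ha j) (critPath_mono prec ht)

/-- **Lemma 2.**
There are `d ≥ 1` resource types with total amounts `P i ≥ 1`, and `n` jobs; each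
job `j` has a finite nonempty set `S j` of candidate allocations, a positive
execution time `t j q` for each `q ∈ S j`, and precedence constraints given by a
strict partial order `prec`.  Then there exists an allocation decision `p*` with
`p* j ∈ S j` for every `j` such that every `p* j` is non-dominated in `S j`
(no `q ∈ S j` has both strictly smaller execution time and strictly smaller
average area) and `L(p*)` equals the minimum of `L` over all allocation decisions. -/
theorem nondominated_allocation_achieves_Lmin
    (d n : ℕ) (hd : 1 ≤ d)
    (P : Fin d → ℕ) (hP : ∀ i, 1 ≤ P i)
    (S : Fin n → Finset (Fin d → ℕ)) (hS : ∀ j, (S j).Nonempty)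
    (t : Fin n → (Fin d → ℕ) → ℝ) (ht : ∀ j, ∀ q ∈ S j, 0 < t j q)
    (prec : Fin n → Fin n → Prop)
    (hirr : ∀ j, ¬ prec j j)
    (htrans : ∀ a b c, prec a b → prec b c → prec a c) :
    ∃ p : Fin n → Fin d → ℕ,
      (∀ j, p j ∈ S j) ∧
      (∀ j, ¬ ∃ q ∈ S j, t j q < t j (p j) ∧ avgArea P (t j) q < avgArea P (t j) (p j)) ∧
      (∀ q : Fin n → Fin d → ℕ, (∀ j, q j ∈ S j) →
        Lval P t prec p ≤ Lval P t prec q) := by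
  classical
  obtain ⟨p₀, hp₀, hmin₀⟩ := Finset.exists_min_image (Fintype.piFinset S) (Lval P t prec)
    (Fintype.piFinset_nonempty.2 hS)
  obtain ⟨p, hp, hmin⟩ := Finset.exists_min_image
    ((Fintype.piFinset S).filter fun p => Lval P t prec p ≤ Lval P t prec p₀)
    (fun p => ∑ j, t j (p j)) ⟨p₀, Finset.mem_filter.2 ⟨hp₀, le_rfl⟩⟩
  obtain ⟨hpS, hpL⟩ := Finset.mem_filter.1 hp
  rw [Fintype.mem_piFinset] at hpS
  refine ⟨p, hpS, ?_, fun q hq => hpL.trans (hmin₀ q (Fintype.mem_piFinset.2 hq))⟩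
  rintro j ⟨q, hqS, hqt, hqa⟩
  have hle : ∀ k, t k (Function.update p j q k) ≤ t k (p k) := by
    intro k
    rcases eq_or_ne k j with rfl | hk
    · simpa using hqt.le
    · simp [hk]
  have hL : Lval P t prec (Function.update p j q) ≤ Lval P t prec p := by
    refine Lval_mono P t prec hle fun k => ?_
    rcases eq_or_ne k j with rfl | hk
    · simpa using hqa.le
    · simp [hk]
  have hmem : ∀ k, Function.update p j q k ∈ S k := by
    intro k
    rcases eq_or_ne k j with rfl | hk
    · simpa using hqS
    · simpa [hk] using hpS k
  have hlt : ∑ k, t k (Function.update p j q k) < ∑ k, t k (p k) :=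
    Finset.sum_lt_sum (fun k _ => hle k) ⟨j, Finset.mem_univ j, by simpa using hqt⟩
  exact absurd (hmin _ (Finset.mem_filter.2
    ⟨Fintype.mem_piFinset.2 hmem, hL.trans hpL⟩)) (not_le.2 hlt)
end

section
/- Let μ ∈ (0, 1/2), let p' ∈ ℕ^d be an allocation with 1 ≤ p'^{(i)} ≤ P^{(i)} for all i, and define the adjusted allocation p by p^{(i)} = min(p'^{(i)}, ⌈μ·P^{(i)}⌉) for every i. If the job is adjusted, i.e., p ≠ p', then its execution time satisfies t(p) ≤ t(p')/μ. (Lemma 4, execution-time bound.) -/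
/-!
The adjustment shrinks no component by more than a factor `μ`: `μ * p' i ≤ p i` for every `i`.
Hence every ratio `p' i / p i` is at most `1 / μ`, and monotonicity of the job, applied to
`p ⪯ p'`, bounds `t p` by the largest of these ratios times `t p'`.
-/

/-- `maxRatio d hd p q = max_{i=1..d} q i / p i`, the largest component-wise ratio
between the allocations `q` and `p`. -/
noncomputable def maxRatio (d : ℕ) (hd : 0 < d) (p q : Fin d → ℕ) : ℝ :=
  Finset.univ.sup' (Finset.univ_nonempty_iff.mpr ⟨⟨0, hd⟩⟩)
    (fun i => (q i : ℝ) / (p i : ℝ))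

/-- **Lemma 4, execution-time bound.**
There are `d ≥ 1` resource types with total amounts `P i ≥ 1`.  A monotonic job has
a positive execution-time function `t` on allocations with all components `≥ 1`:
for `p ⪯ q` (componentwise), `t q ≤ t p ≤ (max_i q i / p i) * t q`.
Let `μ ∈ (0, 1/2)`, let `p'` be an allocation with `1 ≤ p' i ≤ P i` for all `i`,
and define the adjusted allocation `p` by `p i = min (p' i) ⌈μ * P i⌉`.
If the job is adjusted, i.e. `p ≠ p'`, then `t p ≤ t p' / μ`. -/
theorem adjusted_job_time_bound
    (d : ℕ) (hd : 0 < d)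
    (P : Fin d → ℕ) (hP : ∀ i, 1 ≤ P i)
    (t : (Fin d → ℕ) → ℝ)
    (htpos : ∀ q : Fin d → ℕ, (∀ i, 1 ≤ q i) → 0 < t q)
    (hmono : ∀ p q : Fin d → ℕ, (∀ i, 1 ≤ p i) → (∀ i, 1 ≤ q i) →
      (∀ i, p i ≤ q i) → t q ≤ t p ∧ t p ≤ maxRatio d hd p q * t q)
    (μ : ℝ) (hμ0 : 0 < μ) (hμ2 : μ < 1 / 2)
    (p' : Fin d → ℕ) (hp'1 : ∀ i, 1 ≤ p' i) (hp'2 : ∀ i, p' i ≤ P i)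
    (p : Fin d → ℕ) (hp : ∀ i, p i = min (p' i) ⌈μ * (P i : ℝ)⌉₊)
    (hadj : p ≠ p') :
    t p ≤ t p' / μ := by
  have hp1 : ∀ i, 1 ≤ p i := fun i => by
    rw [hp i]
    have hPi : (0 : ℝ) < P i := by exact_mod_cast hP i
    exact le_min (hp'1 i) (Nat.one_le_ceil_iff.mpr (mul_pos hμ0 hPi))
  have hle : ∀ i, p i ≤ p' i := fun i => (hp i).trans_le (min_le_left _ _)
  -- In the minimum defining `p i`, the term `p' i` is at least `μ * p' i` because `μ ≤ 1`,
  -- and the term `⌈μ * P i⌉` is because `p' i ≤ P i`.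
  have hkey : ∀ i, μ * (p' i : ℝ) ≤ (p i : ℝ) := fun i => by
    rw [hp i, Nat.cast_min]
    refine le_min (mul_le_of_le_one_left (Nat.cast_nonneg _) (by linarith)) ?_
    exact (mul_le_mul_of_nonneg_left (Nat.cast_le.mpr (hp'2 i)) hμ0.le).trans (Nat.le_ceil _)
  have hratio : maxRatio d hd p p' ≤ 1 / μ := by
    refine Finset.sup'_le _ _ fun i _ => ?_
    have hpi : (0 : ℝ) < p i := by exact_mod_cast hp1 i
    rw [div_le_div_iff₀ hpi hμ0]
    linarith [hkey i]
  calc t p ≤ maxRatio d hd p p' * t p' := (hmono p p' hp1 hp'1 hle).2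
    _ ≤ 1 / μ * t p' := mul_le_mul_of_nonneg_right hratio (htpos p' hp'1).le
    _ = t p' / μ := by ring
end

section
/- Let μ ∈ (0, 1/2), let p' ∈ ℕ^d be an allocation with 1 ≤ p'^{(i)} ≤ P^{(i)} for all i, and define the adjusted allocation p by p^{(i)} = min(p'^{(i)}, ⌈μ·P^{(i)}⌉) for every i. If the job is adjusted, i.e., p ≠ p', then for every resource type i with P^{(i)} ≥ 1/μ², the area of the job on resource type i under p is at most d times its average area under p': p^{(i)}·t(p)/P^{(i)} ≤ ∑_{ℓ=1}^d p'^{(ℓ)}·t(p')/P^{(ℓ)}. (Lemma 4, area bound.) -/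
/-- Here `x` and `z` are the fractions of two resources used before adjustment and `y` is the
fraction of the second one used afterwards. The part of `y * x / μ` exceeding `y` is paid for
by `x`. -/
lemma mul_div_le_add_of_rounding {μ x y z : ℝ} (hμ : 0 < μ) (hx0 : 0 ≤ x) (hx1 : x ≤ 1)
    (hy0 : 0 ≤ y) (hyz : y ≤ z) (hy : y ≤ μ + μ ^ 2) : y * x / μ ≤ x + z := by
  suffices h : y * x / μ ≤ x + y by linarith
  rw [div_le_iff₀ hμ]
  rcases le_total x μ with h | h
  · nlinarith [mul_nonneg hy0 (sub_nonneg.2 h), mul_nonneg hx0 hμ.le]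
  · have h1 : y * (x - μ) ≤ (μ + μ ^ 2) * (x - μ) :=
      mul_le_mul_of_nonneg_right hy (sub_nonneg.2 h)
    have h2 : μ ^ 2 * x ≤ μ ^ 2 * 1 := mul_le_mul_of_nonneg_left hx1 (sq_nonneg μ)
    nlinarith [pow_pos hμ 3]

/-- **Lemma 4, area bound.**
There are `d ≥ 1` resource types with total amounts `P i ≥ 1`.  A monotonic job has
a positive execution-time function `t` on allocations with all components `≥ 1`:
for `p ⪯ q` (componentwise), `t q ≤ t p ≤ (max_i q i / p i) * t q`.
Let `μ ∈ (0, 1/2)`, let `p'` be an allocation with `1 ≤ p' i ≤ P i` for all `i`,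
and define the adjusted allocation `p` by `p i = min (p' i) ⌈μ * P i⌉`.
If the job is adjusted, i.e. `p ≠ p'`, then for every resource type `i` with
`P i ≥ 1/μ²`, the area of the job on resource type `i` under `p` is at most `d`
times its average area under `p'`:
`p i * t p / P i ≤ ∑_ℓ p' ℓ * t p' / P ℓ`. -/
theorem adjusted_job_area_bound
    (d : ℕ) (hd : 0 < d)
    (P : Fin d → ℕ) (hP : ∀ i, 1 ≤ P i)
    (t : (Fin d → ℕ) → ℝ)
    (htpos : ∀ q : Fin d → ℕ, (∀ i, 1 ≤ q i) → 0 < t q)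
    (hmono : ∀ p q : Fin d → ℕ, (∀ i, 1 ≤ p i) → (∀ i, 1 ≤ q i) →
      (∀ i, p i ≤ q i) → t q ≤ t p ∧ t p ≤ maxRatio d hd p q * t q)
    (μ : ℝ) (hμ0 : 0 < μ) (hμ2 : μ < 1 / 2)
    (p' : Fin d → ℕ) (hp'1 : ∀ i, 1 ≤ p' i) (hp'2 : ∀ i, p' i ≤ P i)
    (p : Fin d → ℕ) (hp : ∀ i, p i = min (p' i) ⌈μ * (P i : ℝ)⌉₊)
    (hadj : p ≠ p') :
    ∀ i : Fin d, 1 / μ ^ 2 ≤ (P i : ℝ) →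
      (p i : ℝ) * t p / (P i : ℝ) ≤ ∑ ℓ, (p' ℓ : ℝ) * t p' / (P ℓ : ℝ) := by
  intro i hi
  have hPpos : ∀ j, (0 : ℝ) < P j := fun j => by exact_mod_cast hP j
  have hp1 : ∀ j, 1 ≤ p j := fun j => by
    rw [hp j]
    exact le_min (hp'1 j) (Nat.one_le_iff_ne_zero.2 (Nat.ceil_pos.2 (mul_pos hμ0 (hPpos j))).ne')
  have hple : ∀ j, p j ≤ p' j := fun j => by rw [hp j]; exact min_le_left _ _
  have hppos : ∀ j, (0 : ℝ) < p j := fun j => by exact_mod_cast hp1 j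
  have hT : 0 < t p' := htpos p' hp'1
  have ht : t p ≤ maxRatio d hd p p' * t p' := (hmono p p' hp1 hp'1 hple).2
  obtain ⟨k, -, hk⟩ := Finset.exists_mem_eq_sup' (Finset.univ_nonempty_iff.mpr ⟨⟨0, hd⟩⟩)
    (fun j => (p' j : ℝ) / (p j : ℝ))
  change maxRatio d hd p p' = (p' k : ℝ) / p k at hk
  have hpk : p k < p' k := by
    obtain ⟨j, hj⟩ := Function.ne_iff.1 hadj
    have hj' : (p j : ℝ) < p' j := by exact_mod_cast lt_of_le_of_ne (hple j) hj
    have hjk : (p' j : ℝ) / p j ≤ p' k / p k := by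
      rw [← hk]
      exact Finset.le_sup' (fun j => (p' j : ℝ) / (p j : ℝ)) (Finset.mem_univ j)
    have h1 : 1 < (p' k : ℝ) / p k := ((one_lt_div (hppos j)).2 hj').trans_le hjk
    exact_mod_cast (one_lt_div (hppos k)).1 h1
  have hpkμ : μ * P k ≤ p k := by
    have h : p k = ⌈μ * (P k : ℝ)⌉₊ := by
      have := hp k
      omega
    rw [h]
    exact Nat.le_ceil _
  rw [hk] at ht
  have hterm : ∀ l ∈ Finset.univ, 0 ≤ (p' l : ℝ) * t p' / (P l : ℝ) := fun l _ => by positivity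
  have harea : (p i : ℝ) * t p / P i ≤ p i * (p' k / p k * t p') / P i := by gcongr
  refine harea.trans ?_
  by_cases hik : i = k
  · subst hik
    have h : (p i : ℝ) * (p' i / p i * t p') / P i = p' i * t p' / P i := by
      have := (hppos i).ne'
      field_simp
    rw [h]
    exact Finset.single_le_sum hterm (Finset.mem_univ i)
  · have hpair : (p' k : ℝ) * t p' / P k + p' i * t p' / P i
        ≤ ∑ ℓ, (p' ℓ : ℝ) * t p' / (P ℓ : ℝ) := by
      rw [← Finset.sum_pair (f := fun l => (p' l : ℝ) * t p' / (P l : ℝ)) (Ne.symm hik)]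
      exact Finset.sum_le_sum_of_subset_of_nonneg (Finset.subset_univ _)
        fun l hl _ => hterm l (Finset.mem_univ l)
    refine le_trans ?_ hpair
    have hx1 : (p' k : ℝ) / P k ≤ 1 :=
      (div_le_one (hPpos k)).2 (by exact_mod_cast hp'2 k)
    have hyz : (p i : ℝ) / P i ≤ p' i / P i :=
      div_le_div_of_nonneg_right (by exact_mod_cast hple i) (hPpos i).le
    have hy : (p i : ℝ) / P i ≤ μ + μ ^ 2 := by
      rw [div_le_iff₀ (hPpos i)]
      have h1 : (p i : ℝ) ≤ ⌈μ * (P i : ℝ)⌉₊ := by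
        exact_mod_cast (hp i).le.trans (min_le_right _ _)
      have h2 := Nat.ceil_lt_add_one (mul_pos hμ0 (hPpos i)).le
      have h3 : 1 ≤ (P i : ℝ) * μ ^ 2 := (div_le_iff₀ (by positivity)).1 hi
      linarith
    have key := mul_div_le_add_of_rounding hμ0 (by positivity) hx1 (by positivity) hyz hy
    have hratio : (p' k : ℝ) / p k ≤ p' k / P k / μ := by
      rw [div_div, mul_comm (P k : ℝ)]
      exact div_le_div_of_nonneg_left (by positivity) (mul_pos hμ0 (hPpos k)) hpkμ
    calc (p i : ℝ) * (p' k / p k * t p') / P i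
        ≤ p i * (p' k / P k / μ * t p') / P i := by gcongr
      _ = p i / P i * (p' k / P k) / μ * t p' := by ring
      _ ≤ (p' k / P k + p' i / P i) * t p' := by gcongr
      _ = p' k * t p' / P k + p' i * t p' / P i := by ring
end

section
/- Consider a schedule of n jobs together with, for each job j, an initial allocation p'_j ∈ ℕ^d and a number t'_j > 0 such that: p_j^{(i)} = min(p'^{(i)}_j, ⌈μ·P^{(i)}⌉) for all i and j; μ·t_j ≤ t'_j for all j; and t_j = t'_j whenever p_j = p'_j. Suppose there is a set f of jobs whose execution intervals are pairwise disjoint and such that every time τ ∈ S1 ∪ S2 lies in the execution interval of some job of f. Then T1 + μ·T2 ≤ ∑_{j∈f} t'_j. (Lemma 5: critical-path bound for list scheduling.) -/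
/-!
Let `I j = [s j, s j + t j)` for `j ∈ f`. As `S1 ∪ S2` is covered by these intervals, it suffices
to bound, for each `j ∈ f` separately, the contribution `|S1 ∩ I j| + μ |S2 ∩ I j|` by `t' j`.
If the allocation of `j` was not reduced (`p j = p' j`), the contribution is at most
`|I j| = t j = t' j`, because `S1` and `S2` are disjoint and `μ ≤ 1`. If it was reduced, then `j`
alone uses `⌈μ P i⌉` units of some resource `i` throughout `I j`, so `S1 ∩ I j = ∅` and the
contribution is at most `μ t j ≤ t' j`.
-/


open MeasureTheory

/-- The utilization of resource type `i` at time `τ`: the total amount of resource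
of type `i` allocated to jobs running at time `τ` (job `j` runs on `[s j, s j + t j)`). -/
noncomputable def util {d n : ℕ} (s t : Fin n → ℝ) (p : Fin n → Fin d → ℕ)
    (i : Fin d) (τ : ℝ) : ℕ :=
  ∑ j ∈ Finset.univ.filter (fun j => s j ≤ τ ∧ τ < s j + t j), p j i

/-- `S1`: times `τ ∈ [0, T)` at which the utilization of every resource type `i`
is at most `⌈μ P i⌉ - 1` (i.e. strictly less than `⌈μ P i⌉`). -/
noncomputable def S1set {d n : ℕ} (P : Fin d → ℕ) (s t : Fin n → ℝ)
    (p : Fin n → Fin d → ℕ) (μ T : ℝ) : Set ℝ :=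
  {τ | 0 ≤ τ ∧ τ < T ∧ ∀ i, util s t p i τ < ⌈μ * (P i : ℝ)⌉₊}

/-- `S2`: times `τ ∈ [0, T)` at which some resource type `k` has utilization at
least `⌈μ P k⌉`, but every resource type `i` has utilization at most
`⌈(1-μ) P i⌉ - 1`. -/
noncomputable def S2set {d n : ℕ} (P : Fin d → ℕ) (s t : Fin n → ℝ)
    (p : Fin n → Fin d → ℕ) (μ T : ℝ) : Set ℝ :=
  {τ | 0 ≤ τ ∧ τ < T ∧ (∃ k, ⌈μ * (P k : ℝ)⌉₊ ≤ util s t p k τ) ∧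
    ∀ i, util s t p i τ < ⌈(1 - μ) * (P i : ℝ)⌉₊}

/-- `S3`: times `τ ∈ [0, T)` at which some resource type `k` has utilization at
least `⌈(1-μ) P k⌉`. -/
noncomputable def S3set {d n : ℕ} (P : Fin d → ℕ) (s t : Fin n → ℝ)
    (p : Fin n → Fin d → ℕ) (μ T : ℝ) : Set ℝ :=
  {τ | 0 ≤ τ ∧ τ < T ∧ ∃ k, ⌈(1 - μ) * (P k : ℝ)⌉₊ ≤ util s t p k τ}

theorem measurable_util {d n : ℕ} (s t : Fin n → ℝ) (p : Fin n → Fin d → ℕ) (i : Fin d) :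
    Measurable (util s t p i) := by
  have h : util s t p i =
      fun τ => ∑ j, (Set.Ico (s j) (s j + t j)).indicator (fun _ => p j i) τ := by
    funext τ
    simp only [util, Finset.sum_filter, Set.indicator_apply, Set.mem_Ico]
  rw [h]
  exact Finset.measurable_sum _ fun j _ => measurable_const.indicator measurableSet_Ico

theorem measurableSet_S1set {d n : ℕ} (P : Fin d → ℕ) (s t : Fin n → ℝ)
    (p : Fin n → Fin d → ℕ) (μ T : ℝ) : MeasurableSet (S1set P s t p μ T) := by
  have h : S1set P s t p μ T =
      Set.Ico 0 T ∩ ⋂ i, {τ | util s t p i τ < ⌈μ * (P i : ℝ)⌉₊} := by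
    ext τ
    simp [S1set, and_assoc]
  rw [h]
  exact measurableSet_Ico.inter
    (MeasurableSet.iInter fun i => measurableSet_lt (measurable_util s t p i) measurable_const)

theorem disjoint_S1set_S2set {d n : ℕ} (P : Fin d → ℕ) (s t : Fin n → ℝ)
    (p : Fin n → Fin d → ℕ) (μ T : ℝ) :
    Disjoint (S1set P s t p μ T) (S2set P s t p μ T) := by
  rw [Set.disjoint_left]
  rintro τ ⟨-, -, h⟩ ⟨-, -, ⟨k, hk⟩, -⟩
  exact absurd (h k) (not_lt.mpr hk)

/-- A running job contributes its whole allocation to the utilization. -/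
theorem le_util {d n : ℕ} (s t : Fin n → ℝ) (p : Fin n → Fin d → ℕ) (i : Fin d) {j : Fin n}
    {τ : ℝ} (h : τ ∈ Set.Ico (s j) (s j + t j)) : p j i ≤ util s t p i τ :=
  Finset.single_le_sum (f := fun j => p j i) (fun _ _ => Nat.zero_le _)
    (Finset.mem_filter.mpr ⟨Finset.mem_univ j, h⟩)

/-- A set covered by finitely many intervals has measure at most the sum of the measures of its
traces on them. -/
theorem measureReal_le_sum_inter {n : ℕ} (s t : Fin n → ℝ) (f : Finset (Fin n)) (A : Set ℝ)
    (hA : ∀ τ ∈ A, ∃ j ∈ f, s j ≤ τ ∧ τ < s j + t j) :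
    volume.real A ≤ ∑ j ∈ f, volume.real (A ∩ Set.Ico (s j) (s j + t j)) := by
  have hU : A = ⋃ j ∈ f, A ∩ Set.Ico (s j) (s j + t j) := by
    ext τ
    simp only [Set.mem_iUnion, Set.mem_inter_iff, Set.mem_Ico, exists_prop]
    constructor
    · intro h
      obtain ⟨j, hj, hτ⟩ := hA τ h
      exact ⟨j, hj, h, hτ⟩
    · rintro ⟨j, -, h, -⟩
      exact h
  calc volume.real A = volume.real (⋃ j ∈ f, A ∩ Set.Ico (s j) (s j + t j)) := by rw [← hU]
    _ ≤ _ := measureReal_biUnion_finset_le f _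

/-- **Lemma 5: critical-path bound for list scheduling.**
Consider a schedule of `n` jobs (start times `s j ≥ 0`, durations `t j > 0`,
allocations `p j`), with makespan bound `T` and `μ ∈ (0, 1/2)`.  Each job `j` also
has an initial allocation `p' j` and a number `t' j > 0` such that
`p j i = min (p' j i) ⌈μ P i⌉` for all `i`, `μ * t j ≤ t' j`, and `t j = t' j`
whenever `p j = p' j`.  If there is a set `f` of jobs whose execution intervals are
pairwise disjoint and such that every time in `S1 ∪ S2` lies in the execution
interval of some job of `f`, then `T1 + μ T2 ≤ ∑_{j ∈ f} t' j`, where `T1, T2` are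
the Lebesgue measures of `S1, S2`. -/
theorem critical_path_bound
    (d n : ℕ) (hd : 0 < d)
    (P : Fin d → ℕ) (hP : ∀ i, 1 ≤ P i)
    (s t : Fin n → ℝ) (p : Fin n → Fin d → ℕ)
    (hs : ∀ j, 0 ≤ s j) (ht : ∀ j, 0 < t j)
    (μ : ℝ) (hμ0 : 0 < μ) (hμ2 : μ < 1 / 2)
    (T : ℝ) (hT : ∀ j, s j + t j ≤ T)
    (p' : Fin n → Fin d → ℕ) (t' : Fin n → ℝ) (ht' : ∀ j, 0 < t' j)
    (hadj : ∀ j i, p j i = min (p' j i) ⌈μ * (P i : ℝ)⌉₊)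
    (htb : ∀ j, μ * t j ≤ t' j)
    (hunadj : ∀ j, p j = p' j → t j = t' j)
    (f : Finset (Fin n))
    (hdisj : ∀ j ∈ f, ∀ k ∈ f, j ≠ k → s j + t j ≤ s k ∨ s k + t k ≤ s j)
    (hcover : ∀ τ ∈ S1set P s t p μ T ∪ S2set P s t p μ T,
      ∃ j ∈ f, s j ≤ τ ∧ τ < s j + t j) :
    (volume (S1set P s t p μ T)).toReal + μ * (volume (S2set P s t p μ T)).toReal
      ≤ ∑ j ∈ f, t' j := by
  change volume.real (S1set P s t p μ T) + μ * volume.real (S2set P s t p μ T) ≤ _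
  have h1 := measureReal_le_sum_inter s t f (S1set P s t p μ T)
    fun τ h => hcover τ (Or.inl h)
  have h2 := measureReal_le_sum_inter s t f (S2set P s t p μ T)
    fun τ h => hcover τ (Or.inr h)
  have key : ∀ j ∈ f, volume.real (S1set P s t p μ T ∩ Set.Ico (s j) (s j + t j)) +
      μ * volume.real (S2set P s t p μ T ∩ Set.Ico (s j) (s j + t j)) ≤ t' j := by
    intro j _
    have hI : volume.real (Set.Ico (s j) (s j + t j)) = t j := by
      rw [Real.volume_real_Ico_of_le (by linarith [ht j])]
      ring
    have hfin : volume (Set.Ico (s j) (s j + t j)) ≠ ⊤ := by simp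
    by_cases hj : p j = p' j
    · have hsplit := measureReal_inter_add_sdiff (μ := volume)
        (s := Set.Ico (s j) (s j + t j)) (measurableSet_S1set P s t p μ T) hfin
      have hsub : volume.real (S2set P s t p μ T ∩ Set.Ico (s j) (s j + t j)) ≤
          volume.real (Set.Ico (s j) (s j + t j) \ S1set P s t p μ T) :=
        measureReal_mono (fun τ h => ⟨h.2, fun h' =>
          Set.disjoint_left.mp (disjoint_S1set_S2set P s t p μ T) h' h.1⟩)
          (measure_ne_top_of_subset Set.sdiff_subset hfin)
      have hnn : 0 ≤ volume.real (S2set P s t p μ T ∩ Set.Ico (s j) (s j + t j)) :=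
        measureReal_nonneg
      rw [Set.inter_comm] at hsplit
      have := hunadj j hj
      nlinarith
    · obtain ⟨i, hi⟩ : ∃ i, p j i ≠ p' j i := Function.ne_iff.mp hj
      have hpi : p j i = ⌈μ * (P i : ℝ)⌉₊ := by
        have := hadj j i
        omega
      have hempty : S1set P s t p μ T ∩ Set.Ico (s j) (s j + t j) = ∅ := by
        rw [Set.eq_empty_iff_forall_notMem]
        rintro τ ⟨⟨-, -, h⟩, hτ⟩
        have := le_util s t p i hτ
        have := h i
        omega
      have hsub : volume.real (S2set P s t p μ T ∩ Set.Ico (s j) (s j + t j)) ≤ t j :=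
        (measureReal_mono Set.inter_subset_right hfin).trans_eq hI
      rw [hempty, measureReal_empty, zero_add]
      exact (mul_le_mul_of_nonneg_left hsub hμ0.le).trans (htb j)
  calc _ ≤ ∑ j ∈ f, volume.real (S1set P s t p μ T ∩ Set.Ico (s j) (s j + t j)) +
        μ * ∑ j ∈ f, volume.real (S2set P s t p μ T ∩ Set.Ico (s j) (s j + t j)) :=
        add_le_add h1 (mul_le_mul_of_nonneg_left h2 hμ0.le)
    _ = ∑ j ∈ f, (volume.real (S1set P s t p μ T ∩ Set.Ico (s j) (s j + t j)) +
        μ * volume.real (S2set P s t p μ T ∩ Set.Ico (s j) (s j + t j))) := by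
        rw [Finset.mul_sum, Finset.sum_add_distrib]
    _ ≤ ∑ j ∈ f, t' j := Finset.sum_le_sum key
end

section
/- Consider a schedule of n jobs with makespan T (s_j + t_j ≤ T for all j), and suppose nonnegative reals a'_1, …, a'_n satisfy p_j^{(i)}·t_j/P^{(i)} ≤ d·a'_j for every job j and every resource type i. Then μ·T2 + (1−μ)·T3 ≤ d·∑_{j=1}^n a'_j. (Lemma 6: area bound for list scheduling, where a'_j is the average area of job j under the initial allocation.) -/
/-!
Call `d * a' j / t j` the rate of job `j`. It works for every resource type at once: the normalized
allocation `p j i / P i` is at most this number, whatever `i` is. Hence at each time `τ` the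
normalized utilization `U i τ / P i`, for every `i` (in particular for the type `k` witnessing
membership in `S2` or `S3`, which may vary with `τ`), is at most the sum `rateSum` of the rates of
the running jobs. So `μ 1_{S2} + (1 - μ) 1_{S3} ≤ rateSum` pointwise, the two sets being disjoint.
Integrating over `τ`, each job contributes rate times duration, `d * a' j`.
-/

open MeasureTheory

theorem util_eq_sum_ite {d n : ℕ} (s t : Fin n → ℝ) (p : Fin n → Fin d → ℕ) (i : Fin d) (τ : ℝ) :
    util s t p i τ = ∑ j, if τ ∈ Set.Ico (s j) (s j + t j) then p j i else 0 := by
  simp only [util, Finset.sum_filter, Set.mem_Ico]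

theorem measurableSet_S3set {d n : ℕ} (P : Fin d → ℕ) (s t : Fin n → ℝ)
    (p : Fin n → Fin d → ℕ) (μ T : ℝ) : MeasurableSet (S3set P s t p μ T) := by
  have h : S3set P s t p μ T =
      Set.Ico 0 T ∩ ⋃ k, {τ | ⌈(1 - μ) * (P k : ℝ)⌉₊ ≤ util s t p k τ} := by
    ext τ; simp [S3set, and_assoc]
  rw [h]
  exact measurableSet_Ico.inter (MeasurableSet.iUnion fun k =>
    measurableSet_le measurable_const (measurable_util s t p k))

theorem measurableSet_S2set {d n : ℕ} (P : Fin d → ℕ) (s t : Fin n → ℝ)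
    (p : Fin n → Fin d → ℕ) (μ T : ℝ) : MeasurableSet (S2set P s t p μ T) := by
  have h : S2set P s t p μ T =
      Set.Ico 0 T ∩ ((⋃ k, {τ | ⌈μ * (P k : ℝ)⌉₊ ≤ util s t p k τ}) ∩
        ⋂ i, {τ | util s t p i τ < ⌈(1 - μ) * (P i : ℝ)⌉₊}) := by
    ext τ; simp [S2set, and_assoc]
  rw [h]
  exact measurableSet_Ico.inter ((MeasurableSet.iUnion fun k =>
    measurableSet_le measurable_const (measurable_util s t p k)).inter
    (MeasurableSet.iInter fun k =>
      measurableSet_lt (measurable_util s t p k) measurable_const))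

/-- The sum of `c j / t j` over the jobs `j` running at time `τ`, where `c j` stands for a bound
on the area of job `j` in every resource type. -/
noncomputable def rateSum {n : ℕ} (s t c : Fin n → ℝ) (τ : ℝ) : ℝ :=
  ∑ j, (Set.Ico (s j) (s j + t j)).indicator (fun _ => c j / t j) τ

theorem integrable_rate (a b r : ℝ) :
    Integrable ((Set.Ico a b).indicator fun _ : ℝ => r) := by
  refine (integrable_indicator_iff measurableSet_Ico).2 (integrableOn_const ?_)
  simp

theorem integrable_rateSum {n : ℕ} (s t c : Fin n → ℝ) : Integrable (rateSum s t c) :=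
  integrable_finsetSum _ fun _ _ => integrable_rate _ _ _

theorem integral_rateSum {n : ℕ} (s t c : Fin n → ℝ) (ht : ∀ j, 0 < t j) :
    ∫ τ, rateSum s t c τ = ∑ j, c j := by
  unfold rateSum
  rw [integral_finsetSum _ fun _ _ => integrable_rate _ _ _]
  refine Finset.sum_congr rfl fun j _ => ?_
  rw [integral_indicator measurableSet_Ico, setIntegral_const]
  have := ht j
  simp only [Measure.real, Real.volume_Ico, smul_eq_mul, add_sub_cancel_left,
    ENNReal.toReal_ofReal this.le]
  field_simp

theorem rateSum_nonneg {n : ℕ} (s t c : Fin n → ℝ) (ht : ∀ j, 0 < t j) (hc : ∀ j, 0 ≤ c j)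
    (τ : ℝ) : 0 ≤ rateSum s t c τ :=
  Finset.sum_nonneg fun j _ => Set.indicator_nonneg (fun _ _ => div_nonneg (hc j) (ht j).le) τ

/-- If some resource type has utilization at least `⌈x P⌉`, the running jobs have total rate at
least `x`. -/
theorem le_rateSum {d n : ℕ} (P : Fin d → ℕ) (hP : ∀ i, 1 ≤ P i) (s t c : Fin n → ℝ)
    (p : Fin n → Fin d → ℕ) (ht : ∀ j, 0 < t j)
    (hc : ∀ j i, (p j i : ℝ) * t j / (P i : ℝ) ≤ c j) (x τ : ℝ) (k : Fin d)
    (h : ⌈x * (P k : ℝ)⌉₊ ≤ util s t p k τ) : x ≤ rateSum s t c τ := by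
  have hPk : (0 : ℝ) < P k := by exact_mod_cast hP k
  have h1 : x * (P k : ℝ) ≤ (util s t p k τ : ℝ) := Nat.ceil_le.1 h
  refine ((le_div_iff₀ hPk).2 h1).trans ?_
  rw [util_eq_sum_ite, Nat.cast_sum, Finset.sum_div]
  refine Finset.sum_le_sum fun j _ => ?_
  by_cases hj : τ ∈ Set.Ico (s j) (s j + t j)
  · rw [if_pos hj, Set.indicator_of_mem hj, le_div_iff₀ (ht j)]
    have := hc j k
    rwa [mul_div_right_comm] at this
  · rw [if_neg hj, Set.indicator_of_notMem hj, Nat.cast_zero, zero_div]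

/-- **Lemma 6: area bound for list scheduling.**
Consider a schedule of `n` jobs (start times `s j ≥ 0`, durations `t j > 0`,
allocations `p j`) with makespan bound `T` and `μ ∈ (0, 1/2)`.  Suppose
nonnegative reals `a' j` satisfy `p j i * t j / P i ≤ d * a' j` for every job `j`
and resource type `i`.  Then `μ T2 + (1-μ) T3 ≤ d * ∑_j a' j`, where `T2, T3` are
the Lebesgue measures of `S2, S3`. -/
theorem area_bound
    (d n : ℕ) (hd : 0 < d)
    (P : Fin d → ℕ) (hP : ∀ i, 1 ≤ P i)
    (s t : Fin n → ℝ) (p : Fin n → Fin d → ℕ)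
    (hs : ∀ j, 0 ≤ s j) (ht : ∀ j, 0 < t j)
    (μ : ℝ) (hμ0 : 0 < μ) (hμ2 : μ < 1 / 2)
    (T : ℝ) (hT : ∀ j, s j + t j ≤ T)
    (a' : Fin n → ℝ) (ha' : ∀ j, 0 ≤ a' j)
    (hab : ∀ (j : Fin n) (i : Fin d), (p j i : ℝ) * t j / (P i : ℝ) ≤ d * a' j) :
    μ * (volume (S2set P s t p μ T)).toReal
      + (1 - μ) * (volume (S3set P s t p μ T)).toReal
      ≤ d * ∑ j, a' j := by
  have hc0 : ∀ j, 0 ≤ (d : ℝ) * a' j := fun j => mul_nonneg (Nat.cast_nonneg d) (ha' j)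
  have hfin : ∀ A : Set ℝ, A ⊆ Set.Ico 0 T → volume A ≠ ⊤ := fun A hA =>
    ((measure_mono hA).trans_lt measure_Ico_lt_top).ne
  have hint : ∀ (A : Set ℝ) (x : ℝ), MeasurableSet A → A ⊆ Set.Ico 0 T →
      Integrable (A.indicator fun _ : ℝ => x) := fun A x hm hA =>
    (integrable_indicator_iff hm).2 (integrableOn_const (hfin A hA))
  have hval : ∀ (A : Set ℝ) (x : ℝ), MeasurableSet A →
      ∫ τ, A.indicator (fun _ : ℝ => x) τ = x * (volume A).toReal := fun A x hm => by
    rw [integral_indicator hm, setIntegral_const, smul_eq_mul, mul_comm, Measure.real]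
  have hm2 := measurableSet_S2set P s t p μ T
  have hm3 := measurableSet_S3set P s t p μ T
  have hi2 := hint _ μ hm2 fun τ h => ⟨h.1, h.2.1⟩
  have hi3 := hint _ (1 - μ) hm3 fun τ h => ⟨h.1, h.2.1⟩
  rw [← hval _ μ hm2, ← hval _ (1 - μ) hm3, ← integral_add hi2 hi3, Finset.mul_sum,
    ← integral_rateSum s t (fun j => (d : ℝ) * a' j) ht]
  refine integral_mono (hi2.add hi3) (integrable_rateSum _ _ _) fun τ => ?_
  by_cases h3 : τ ∈ S3set P s t p μ T
  · obtain ⟨-, -, k, hk⟩ := id h3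
    have h2 : τ ∉ S2set P s t p μ T := fun h2 => (h2.2.2.2 k).not_ge hk
    simpa [h2, h3] using le_rateSum P hP s t _ p ht hab (1 - μ) τ k hk
  · by_cases h2 : τ ∈ S2set P s t p μ T
    · obtain ⟨-, -, ⟨k, hk⟩, -⟩ := id h2
      simpa [h2, h3] using le_rateSum P hP s t _ p ht hab μ τ k hk
    · simpa [h2, h3] using rateSum_nonneg s t _ ht hc0 τ
end

section
/- Let d ≥ 1, μ ∈ [(3−√5)/2, 1/2), ρ ∈ (0,1) be reals, and let T1, T2, T3, C, A, X be nonnegative reals satisfying T1 + μ·T2 ≤ C, μ·T2 + (1−μ)·T3 ≤ d·A, C ≤ X/ρ, and A ≤ X/(1−ρ). Then T1 + T2 + T3 ≤ (1/ρ + d/((1−μ)(1−ρ)))·X. (The key combination step in the proof of Theorem 1: the makespan of the multi-resource list schedule is at most f_d(μ,ρ)·T_opt.) -/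
/-!
Dividing the area bound by `1 - μ` and adding the critical-path bound gives
`T1 + (μ + μ / (1 - μ)) * T2 + T3 ≤ C + d * A / (1 - μ)`. The coefficient of `T2` is at least `1`
exactly when `(1 - μ) ^ 2 ≤ μ`, which is what the lower bound on `μ` provides, so the left side
dominates `T1 + T2 + T3`. The bounds on `C` and `A` in terms of `X` finish the argument.
-/

/-- `(3 - √5) / 2` is the smaller root of `(1 - μ) ^ 2 = μ`; the larger root exceeds `1 / 2`. -/
lemma one_sub_sq_le_self {μ : ℝ} (hμ1 : (3 - Real.sqrt 5) / 2 ≤ μ) (hμ2 : μ < 1 / 2) :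
    (1 - μ) ^ 2 ≤ μ := by
  have h5 : Real.sqrt 5 ^ 2 = 5 := Real.sq_sqrt (by norm_num)
  have h0 : 0 ≤ Real.sqrt 5 := Real.sqrt_nonneg 5
  have h : 0 ≤ (μ - (3 - Real.sqrt 5) / 2) * ((3 + Real.sqrt 5) / 2 - μ) :=
    mul_nonneg (by linarith) (by linarith)
  nlinarith

/-- **key combination step in Theorem 1.**
Let `d ≥ 1`, `μ ∈ [(3-√5)/2, 1/2)`, `ρ ∈ (0,1)` be reals, and let
`T1, T2, T3, C, A, X` be nonnegative reals satisfying `T1 + μ T2 ≤ C`,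
`μ T2 + (1-μ) T3 ≤ d A`, `C ≤ X/ρ` and `A ≤ X/(1-ρ)`.  Then
`T1 + T2 + T3 ≤ (1/ρ + d/((1-μ)(1-ρ))) X`. -/
theorem theorem1_combination
    (d μ ρ T1 T2 T3 C A X : ℝ)
    (hd : 1 ≤ d)
    (hμ1 : (3 - Real.sqrt 5) / 2 ≤ μ) (hμ2 : μ < 1 / 2)
    (hρ0 : 0 < ρ) (hρ1 : ρ < 1)
    (hT1 : 0 ≤ T1) (hT2 : 0 ≤ T2) (hT3 : 0 ≤ T3)
    (hC : 0 ≤ C) (hA : 0 ≤ A) (hX : 0 ≤ X)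
    (h1 : T1 + μ * T2 ≤ C)
    (h2 : μ * T2 + (1 - μ) * T3 ≤ d * A)
    (h3 : C ≤ X / ρ)
    (h4 : A ≤ X / (1 - ρ)) :
    T1 + T2 + T3 ≤ (1 / ρ + d / ((1 - μ) * (1 - ρ))) * X := by
  have hμ : 0 < 1 - μ := by linarith
  have hρ : 0 < 1 - ρ := by linarith
  have hsq := one_sub_sq_le_self hμ1 hμ2
  have hA' : μ * T2 + (1 - μ) * T3 ≤ d * (X / (1 - ρ)) :=
    h2.trans (mul_le_mul_of_nonneg_left h4 (by linarith))
  have hT23 : (1 - μ) * T2 + T3 ≤ d * (X / (1 - ρ)) / (1 - μ) := by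
    rw [le_div_iff₀ hμ]
    nlinarith [mul_le_mul_of_nonneg_right hsq hT2]
  have hrhs : (1 / ρ + d / ((1 - μ) * (1 - ρ))) * X =
      X / ρ + d * (X / (1 - ρ)) / (1 - μ) := by
    field_simp
  rw [hrhs]
  linarith
end

section
/- Let d ≥ 1, μ ∈ (0, (3−√5)/2], ρ ∈ (0,1) be reals, and let T1, T2, T3, C, A, X be nonnegative reals satisfying T1 + μ·T2 ≤ C, μ·T2 + (1−μ)·T3 ≤ d·A, C ≤ X/ρ, and A ≤ X/(1−ρ). Then T1 + T2 + T3 ≤ ((1−2μ)/(μ(1−μ)ρ) + d/((1−μ)(1−ρ)))·X. (The key combination step in the proof of Theorem 2: the makespan of the multi-resource list schedule is at most g_d(μ,ρ)·T_opt.) -/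
/-!
Put `k = (1 - 2μ) / (μ(1 - μ))`. In `k * (T1 + μ T2) + (μ T2 + (1 - μ) T3) / (1 - μ)` the
coefficients of `T2` and `T3` are exactly `1`, and that of `T1` is `k`. The bound
`μ ≤ (3 - √5) / 2`, the smaller root of `μ² - 3μ + 1`, says precisely that `k ≥ 1`, so this
combination dominates `T1 + T2 + T3`. Bounding the two brackets by `X / ρ` and `d X / (1 - ρ)`
gives the claim.
-/

/-- **key combination step in Theorem 2.**
Let `d ≥ 1`, `μ ∈ (0, (3-√5)/2]`, `ρ ∈ (0,1)` be reals, and let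
`T1, T2, T3, C, A, X` be nonnegative reals satisfying `T1 + μ T2 ≤ C`,
`μ T2 + (1-μ) T3 ≤ d A`, `C ≤ X/ρ` and `A ≤ X/(1-ρ)`.  Then
`T1 + T2 + T3 ≤ ((1-2μ)/(μ(1-μ)ρ) + d/((1-μ)(1-ρ))) X`. -/
theorem theorem2_combination
    (d μ ρ T1 T2 T3 C A X : ℝ)
    (hd : 1 ≤ d)
    (hμ0 : 0 < μ) (hμ1 : μ ≤ (3 - Real.sqrt 5) / 2)
    (hρ0 : 0 < ρ) (hρ1 : ρ < 1)
    (hT1 : 0 ≤ T1) (hT2 : 0 ≤ T2) (hT3 : 0 ≤ T3)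
    (hC : 0 ≤ C) (hA : 0 ≤ A) (hX : 0 ≤ X)
    (h1 : T1 + μ * T2 ≤ C)
    (h2 : μ * T2 + (1 - μ) * T3 ≤ d * A)
    (h3 : C ≤ X / ρ)
    (h4 : A ≤ X / (1 - ρ)) :
    T1 + T2 + T3
      ≤ ((1 - 2 * μ) / (μ * (1 - μ) * ρ) + d / ((1 - μ) * (1 - ρ))) * X := by
  have hs : Real.sqrt 5 ^ 2 = 5 := Real.sq_sqrt (by norm_num)
  have hs0 : 0 ≤ Real.sqrt 5 := Real.sqrt_nonneg 5
  have hs2 : 2 < Real.sqrt 5 := by nlinarith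
  have hμ : 0 < 1 - μ := by linarith
  have hρ : 0 < 1 - ρ := by linarith
  have hq : 0 ≤ μ ^ 2 - 3 * μ + 1 := by
    -- squaring `√5 ≤ 3 - 2μ` gives four times the goal
    have : Real.sqrt 5 ≤ 3 - 2 * μ := by linarith
    nlinarith [pow_le_pow_left₀ hs0 this 2]
  set k := (1 - 2 * μ) / (μ * (1 - μ)) with hk
  have hk1 : 1 ≤ k := by
    rw [hk, le_div_iff₀ (by positivity)]
    nlinarith
  have e1 : k * (T1 + μ * T2) ≤ k * (X / ρ) :=
    mul_le_mul_of_nonneg_left (h1.trans h3) (by linarith)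
  have e2 : (μ * T2 + (1 - μ) * T3) / (1 - μ) ≤ d * (X / (1 - ρ)) / (1 - μ) :=
    div_le_div_of_nonneg_right
      (h2.trans (mul_le_mul_of_nonneg_left h4 (by linarith))) hμ.le
  have e3 : k * (T1 + μ * T2) + (μ * T2 + (1 - μ) * T3) / (1 - μ) = k * T1 + T2 + T3 := by
    rw [hk]
    field_simp
    ring
  have e4 : ((1 - 2 * μ) / (μ * (1 - μ) * ρ) + d / ((1 - μ) * (1 - ρ))) * X
      = k * (X / ρ) + d * (X / (1 - ρ)) / (1 - μ) := by
    rw [hk]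
    field_simp
  rw [e4]
  have e5 : T1 ≤ k * T1 := le_mul_of_one_le_left hT1 hk1
  linarith
end

section
/- For every real d ≥ 1 and every μ ∈ (0, 3/8], the derivative of h_d satisfies h'_d(μ) = 4(2d+4)μ³ − 3(d+8)μ² + 16μ − 4 = dμ²(8μ−3) + 4(2μ−1)(μ² + (1−μ)²) < 0; consequently h_d is strictly decreasing on (0, 3/8]. (From the proof of Theorem 2.) -/
/-!
The derivative of `h_d` splits as `dμ²(8μ - 3) + 4(2μ - 1)(μ² + (1 - μ)²)`. For `0 < μ ≤ 3/8` and
`d ≥ 0` the first summand is nonpositive because `8μ ≤ 3`, and the second is negative because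
`μ < 1/2`. A negative derivative on a convex set gives strict monotonicity.
-/

/-- The quartic `h_d(μ) = (2d+4)μ⁴ - (d+8)μ³ + 8μ² - 4μ + 1` governing the sign of
the derivative of the approximation-ratio function `g_d`. -/
def hquartic (d μ : ℝ) : ℝ :=
  (2 * d + 4) * μ ^ 4 - (d + 8) * μ ^ 3 + 8 * μ ^ 2 - 4 * μ + 1

theorem hasDerivAt_hquartic (d μ : ℝ) :
    HasDerivAt (hquartic d)
      (4 * (2 * d + 4) * μ ^ 3 - 3 * (d + 8) * μ ^ 2 + 16 * μ - 4) μ := by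
  have h := (((((hasDerivAt_pow 4 μ).const_mul (2 * d + 4)).sub
    ((hasDerivAt_pow 3 μ).const_mul (d + 8))).add
    ((hasDerivAt_pow 2 μ).const_mul 8)).sub ((hasDerivAt_id μ).const_mul 4)).add_const 1
  refine h.congr_deriv ?_
  norm_num
  ring

theorem hquartic_deriv_eq (d μ : ℝ) :
    4 * (2 * d + 4) * μ ^ 3 - 3 * (d + 8) * μ ^ 2 + 16 * μ - 4
      = d * μ ^ 2 * (8 * μ - 3) + 4 * (2 * μ - 1) * (μ ^ 2 + (1 - μ) ^ 2) := by
  ring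

theorem hquartic_deriv_lt_zero {d μ : ℝ} (hd : 0 ≤ d) (hμ : μ ∈ Set.Ioc (0 : ℝ) (3 / 8)) :
    4 * (2 * d + 4) * μ ^ 3 - 3 * (d + 8) * μ ^ 2 + 16 * μ - 4 < 0 := by
  obtain ⟨h0, h1⟩ := hμ
  rw [hquartic_deriv_eq]
  have hfirst : d * μ ^ 2 * (8 * μ - 3) ≤ 0 :=
    mul_nonpos_of_nonneg_of_nonpos (by positivity) (by linarith)
  have hsecond : 4 * (2 * μ - 1) * (μ ^ 2 + (1 - μ) ^ 2) < 0 :=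
    mul_neg_of_neg_of_pos (by linarith) (by positivity)
  linarith

/-- **from the proof of Theorem 2.**
For every real `d ≥ 1` and every `μ ∈ (0, 3/8]`, the derivative of `h_d` at `μ`
equals `4(2d+4)μ³ - 3(d+8)μ² + 16μ - 4 = dμ²(8μ-3) + 4(2μ-1)(μ² + (1-μ)²) < 0`;
consequently `h_d` is strictly decreasing on `(0, 3/8]`. -/
theorem hquartic_deriv_neg (d : ℝ) (hd : 1 ≤ d) :
    (∀ μ ∈ Set.Ioc (0 : ℝ) (3 / 8),
      HasDerivAt (hquartic d)
        (4 * (2 * d + 4) * μ ^ 3 - 3 * (d + 8) * μ ^ 2 + 16 * μ - 4) μ ∧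
      4 * (2 * d + 4) * μ ^ 3 - 3 * (d + 8) * μ ^ 2 + 16 * μ - 4
        = d * μ ^ 2 * (8 * μ - 3) + 4 * (2 * μ - 1) * (μ ^ 2 + (1 - μ) ^ 2) ∧
      4 * (2 * d + 4) * μ ^ 3 - 3 * (d + 8) * μ ^ 2 + 16 * μ - 4 < 0) ∧
    StrictAntiOn (hquartic d) (Set.Ioc (0 : ℝ) (3 / 8)) := by
  have hd0 : 0 ≤ d := zero_le_one.trans hd
  refine ⟨fun μ hμ => ⟨hasDerivAt_hquartic d μ, hquartic_deriv_eq d μ,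
    hquartic_deriv_lt_zero hd0 hμ⟩, ?_⟩
  refine strictAntiOn_of_deriv_neg (convex_Ioc 0 (3 / 8))
    (fun μ _ => (hasDerivAt_hquartic d μ).continuousAt.continuousWithinAt) fun μ hμ => ?_
  rw [(hasDerivAt_hquartic d μ).deriv]
  exact hquartic_deriv_lt_zero hd0 (interior_subset hμ)
end

section
/- For every real d with 1 ≤ d ≤ 21 and every μ ∈ (0, (3−√5)/2], h_d(μ) > 0. (Case (1) in the proof of Theorem 2: for d ≤ 21 the optimal adjustment parameter is μ* = (3−√5)/2, recovering the ratio of Theorem 1.) -/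
/-- **Case (1) in the proof of Theorem 2.**
For every real `d` with `1 ≤ d ≤ 21` and every `μ ∈ (0, (3-√5)/2]`,
`h_d(μ) > 0`. -/
theorem hquartic_pos_of_d_le_21
    (d : ℝ) (hd1 : 1 ≤ d) (hd2 : d ≤ 21)
    (μ : ℝ) (hμ0 : 0 < μ) (hμ1 : μ ≤ (3 - Real.sqrt 5) / 2) :
    0 < hquartic d μ := by
  have hs : (2.236 : ℝ) ≤ Real.sqrt 5 := Real.le_sqrt_of_sq_le (by norm_num)
  have hμ : μ ≤ 0.382 := by linarith
  have hmono : hquartic 21 μ ≤ hquartic d μ := by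
    have h : 0 ≤ (21 - d) * (μ ^ 3 * (1 - 2 * μ)) :=
      mul_nonneg (by linarith) (mul_nonneg (by positivity) (by linarith))
    unfold hquartic
    linarith
  refine lt_of_lt_of_le ?_ hmono
  -- The quadratic factor left after subtracting from `h_21` its tangent line at `0.382`.
  have hq : 0 ≤ 46 * (μ ^ 2 + 2 * 0.382 * μ + 3 * 0.382 ^ 2) - 29 * (μ + 2 * 0.382) + 8 := by
    nlinarith [sq_nonneg μ]
  have hconvex := mul_nonneg (sq_nonneg (μ - 0.382)) hq
  unfold hquartic
  linarith
end

section
/- For every real d ≥ 22, the equation h_d(μ) = 0 has a unique solution μ* in the interval (0, (3−√5)/2]; moreover μ* < 3/8, h_d(μ) > 0 for all μ ∈ (0, μ*), and h_d(μ) < 0 for all μ ∈ (μ*, (3−√5)/2]. (Case (2) in the proof of Theorem 2.) -/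
lemma hquartic_eq (d μ : ℝ) :
    hquartic d μ = ((1 - 2 * μ) ^ 2 + 1) ^ 2 / 4 - d * (μ ^ 3 * (1 - 2 * μ)) := by
  unfold hquartic; ring

lemma hquartic_anti {d a b : ℝ} (hd : 0 ≤ d) (ha : 0 ≤ a) (hab : a < b) (hb : b ≤ 3 / 8) :
    hquartic d b < hquartic d a := by
  have hP : ((1 - 2 * b) ^ 2 + 1) ^ 2 < ((1 - 2 * a) ^ 2 + 1) ^ 2 := by
    have h1 : 0 ≤ 1 - 2 * b := by linarith
    gcongr
  have hq : a ^ 3 * (1 - 2 * a) ≤ b ^ 3 * (1 - 2 * b) := by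
    have hb0 : 0 ≤ b := by linarith
    have key : 0 ≤ (a ^ 2 + a * b + b ^ 2) - 2 * (a ^ 3 + a ^ 2 * b + a * b ^ 2 + b ^ 3) := by
      have h1 := mul_nonneg (sq_nonneg b) (sub_nonneg.2 hb)
      have h2 := mul_nonneg (sq_nonneg a) (sub_nonneg.2 hb)
      have h3 := mul_nonneg (mul_nonneg ha hb0) (sub_nonneg.2 hb)
      have h4 := mul_nonneg (sq_nonneg a) (sub_nonneg.2 hab.le)
      have h5 := mul_nonneg ha (sub_nonneg.2 hab.le)
      have h6 := mul_nonneg hb0 (sub_nonneg.2 hab.le)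
      linarith
    have := mul_nonneg (sub_nonneg.2 hab.le) key
    linarith
  have := mul_le_mul_of_nonneg_left hq hd
  rw [hquartic_eq, hquartic_eq]
  linarith

lemma hquartic_neg {d μ : ℝ} (hd : 22 ≤ d) (h1 : 3 / 8 ≤ μ) (h2 : μ ≤ 382 / 1000) :
    hquartic d μ < 0 := by
  have hP : ((1 - 2 * μ) ^ 2 + 1) ^ 2 ≤ ((1 - 2 * (3 / 8 : ℝ)) ^ 2 + 1) ^ 2 := by
    have : 0 ≤ 1 - 2 * μ := by linarith
    gcongr
  -- `q` is decreasing beyond `3/8`, hence bounded below by its value at `0.382`.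
  have hq : (382 / 1000 : ℝ) ^ 3 * (1 - 2 * (382 / 1000)) ≤ μ ^ 3 * (1 - 2 * μ) := by
    have key : 0 ≤ 2 * (382 / 1000 + μ) * ((382 / 1000) ^ 2 + μ ^ 2)
        - ((382 / 1000) ^ 2 + 382 / 1000 * μ + μ ^ 2) := by
      have h3 := mul_nonneg (sub_nonneg.2 h1)
        (by positivity : (0 : ℝ) ≤ (382 / 1000) ^ 2 + μ ^ 2)
      linarith [sq_nonneg (382 / 1000 - μ), sq_nonneg μ]
    have := mul_nonneg (sub_nonneg.2 h2) key
    linarith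
  have h3 : 22 * (μ ^ 3 * (1 - 2 * μ)) ≤ d * (μ ^ 3 * (1 - 2 * μ)) := by
    have : 0 ≤ μ ^ 3 * (1 - 2 * μ) := le_trans (by norm_num) hq
    gcongr
  rw [hquartic_eq]
  linarith

/-- **Case (2) in the proof of Theorem 2.**
For every real `d ≥ 22`, the equation `h_d(μ) = 0` has a unique solution `μ*` in
the interval `(0, (3-√5)/2]`; moreover `μ* < 3/8`, `h_d(μ) > 0` for all
`μ ∈ (0, μ*)`, and `h_d(μ) < 0` for all `μ ∈ (μ*, (3-√5)/2]`. -/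
theorem hquartic_unique_zero (d : ℝ) (hd : 22 ≤ d) :
    ∃ μs : ℝ,
      μs ∈ Set.Ioc (0 : ℝ) ((3 - Real.sqrt 5) / 2) ∧
      hquartic d μs = 0 ∧
      (∀ μ ∈ Set.Ioc (0 : ℝ) ((3 - Real.sqrt 5) / 2), hquartic d μ = 0 → μ = μs) ∧
      μs < 3 / 8 ∧
      (∀ μ ∈ Set.Ioo (0 : ℝ) μs, 0 < hquartic d μ) ∧
      (∀ μ ∈ Set.Ioc μs ((3 - Real.sqrt 5) / 2), hquartic d μ < 0) := by
  have hd0 : 0 ≤ d := by linarith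
  have hc1 : (3 - Real.sqrt 5) / 2 ≤ 382 / 1000 := by
    have : (2236 / 1000 : ℝ) ≤ Real.sqrt 5 := Real.le_sqrt_of_sq_le (by norm_num)
    linarith
  have hc2 : 3 / 8 ≤ (3 - Real.sqrt 5) / 2 := by
    have : Real.sqrt 5 ≤ 9 / 4 := Real.sqrt_le_iff.2 (by norm_num)
    linarith
  have h0 : hquartic d 0 = 1 := by simp [hquartic]
  have h38 : hquartic d (3 / 8) < 0 := hquartic_neg hd le_rfl (by norm_num)
  have hcont : Continuous (hquartic d) := by unfold hquartic; fun_prop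
  obtain ⟨s, ⟨hs0, hs1⟩, hs⟩ := intermediate_value_Ioo' (by norm_num : (0 : ℝ) ≤ 3 / 8)
    hcont.continuousOn (show (0 : ℝ) ∈ Set.Ioo _ _ from ⟨h38, by rw [h0]; norm_num⟩)
  have hpos : ∀ μ ∈ Set.Ioo (0 : ℝ) s, 0 < hquartic d μ := fun μ hμ =>
    hs ▸ hquartic_anti hd0 hμ.1.le hμ.2 hs1.le
  have hneg : ∀ μ ∈ Set.Ioc s ((3 - Real.sqrt 5) / 2), hquartic d μ < 0 := by
    intro μ hμ
    rcases le_total μ (3 / 8) with h | h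
    · exact hs ▸ hquartic_anti hd0 hs0.le hμ.1 h
    · exact hquartic_neg hd h (hμ.2.trans hc1)
  refine ⟨s, ⟨hs0, hs1.le.trans hc2⟩, hs, fun μ hμ hz => ?_, hs1, hpos, hneg⟩
  rcases lt_trichotomy μ s with h | h | h
  · exact absurd hz (hpos μ ⟨hμ.1, h⟩).ne'
  · exact h
  · exact absurd hz (hneg μ ⟨h, hμ.2⟩).ne
end

section
/- As d → ∞, the approximation ratio obtained by choosing the adjustment parameter μ = d^{-1/3} satisfies g_d(d^{-1/3})² = d + 3d^{2/3} + O(d^{1/3}); that is, the function d ↦ g_d(d^{-1/3})² − d − 3d^{2/3} is O(d^{1/3}) as d → ∞. (The asymptotic estimate in Theorem 2: the algorithm achieves ratio d + 3·d^{2/3} + O(d^{1/3}) for large d.) -/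
/-!
Put `t = d^(1/3)`, so `d = t³` and `μ = 1/t`. The two radicands are
`A = t(t-2)/(t-1)` and `B = t⁴/(t-1)`, whose sum is exactly `t³ + t² + 2t`. Hence
`g² - d - 3 d^(2/3) = (A + B + 2 √A √B) - t³ - 3t² = 2t + 2(√A √B - t²)`.
Since `A B = t⁴ (1 - 1/(t-1)²)`, the product `√A √B` lies between `t² - 2t` and `t²`
for `t ≥ 2`, so the left-hand side is at most `2t` in absolute value.
-/

open Asymptotics Filter

/-- The approximation-ratio function
`g_d(μ) = √(1/μ - 1/(1-μ)) + √(d/(1-μ))`. -/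
noncomputable def gfun (d μ : ℝ) : ℝ :=
  Real.sqrt (1 / μ - 1 / (1 - μ)) + Real.sqrt (d / (1 - μ))

/-- The explicit bound behind the asymptotics, in the variable `t = d^(1/3)`. -/
lemma abs_gfun_cube_sub_le {t : ℝ} (ht : 2 ≤ t) :
    |(gfun (t ^ 3) t⁻¹) ^ 2 - t ^ 3 - 3 * t ^ 2| ≤ 2 * t := by
  have h0 : t ≠ 0 := by linarith
  have hpos : 0 < t - 1 := by linarith
  have h1 : t - 1 ≠ 0 := hpos.ne'
  have hinv : 1 - t⁻¹ = (t - 1) / t := by field_simp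
  have hA : 1 / t⁻¹ - 1 / (1 - t⁻¹) = t * (t - 2) / (t - 1) := by
    rw [hinv]; field_simp; ring
  have hB : t ^ 3 / (1 - t⁻¹) = t ^ 4 / (t - 1) := by
    rw [hinv]; field_simp
  have hA0 : 0 ≤ t * (t - 2) / (t - 1) :=
    div_nonneg (mul_nonneg (by linarith) (by linarith)) hpos.le
  have hB0 : 0 ≤ t ^ 4 / (t - 1) := by positivity
  unfold gfun
  rw [hA, hB]
  have hsum : t * (t - 2) / (t - 1) + t ^ 4 / (t - 1) = t ^ 3 + t ^ 2 + 2 * t := by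
    field_simp; ring
  have hprod : t * (t - 2) / (t - 1) * (t ^ 4 / (t - 1))
      = t ^ 5 * (t - 2) / (t - 1) ^ 2 := by
    field_simp
  have hsqrt := Real.sqrt_mul hA0 (t ^ 4 / (t - 1))
  rw [hprod] at hsqrt
  have hupper : Real.sqrt (t ^ 5 * (t - 2) / (t - 1) ^ 2) ≤ t ^ 2 := by
    apply Real.sqrt_le_iff.2 ⟨by positivity, ?_⟩
    rw [div_le_iff₀ (by positivity)]
    -- The difference of the two sides is `t⁴`.
    nlinarith [show 0 ≤ t ^ 4 by positivity]
  have hlower : t ^ 2 - 2 * t ≤ Real.sqrt (t ^ 5 * (t - 2) / (t - 1) ^ 2) := by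
    apply Real.le_sqrt_of_sq_le
    rw [le_div_iff₀ (by positivity)]
    -- After dividing by `t² (t - 2)` this reads `(t - 2) (t - 1)² ≤ t³`.
    have hcub : (t - 2) * (t - 1) ^ 2 ≤ t ^ 3 := by nlinarith
    have hfac : 0 ≤ t ^ 2 * (t - 2) := mul_nonneg (by positivity) (by linarith)
    calc (t ^ 2 - 2 * t) ^ 2 * (t - 1) ^ 2
        = t ^ 2 * (t - 2) * ((t - 2) * (t - 1) ^ 2) := by ring
      _ ≤ t ^ 2 * (t - 2) * t ^ 3 := mul_le_mul_of_nonneg_left hcub hfac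
      _ = t ^ 5 * (t - 2) := by ring
  rw [hsqrt] at hupper hlower
  rw [add_sq, Real.sq_sqrt hA0, Real.sq_sqrt hB0, abs_le]
  constructor <;> linarith

/-- **asymptotic estimate in Theorem 2.**
As `d → ∞`, the approximation ratio obtained by choosing the adjustment parameter
`μ = d^{-1/3}` satisfies `g_d(d^{-1/3})² = d + 3 d^{2/3} + O(d^{1/3})`; that is,
`d ↦ g_d(d^{-1/3})² - d - 3 d^{2/3}` is `O(d^{1/3})` as `d → ∞`. -/
theorem gfun_asymptotics :
    (fun d : ℝ => (gfun d (d ^ (-(1 / 3) : ℝ))) ^ 2 - d - 3 * d ^ ((2 : ℝ) / 3))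
      =O[atTop] (fun d : ℝ => d ^ ((1 : ℝ) / 3)) := by
  refine IsBigO.of_bound 2 ?_
  filter_upwards [eventually_ge_atTop (8 : ℝ)] with d hd
  have hd0 : 0 ≤ d := by linarith
  have ht : (2 : ℝ) ≤ d ^ ((1 : ℝ) / 3) := by
    calc (2 : ℝ) = (2 ^ (3 : ℝ)) ^ ((1 : ℝ) / 3) := by
          rw [← Real.rpow_mul (by norm_num)]; norm_num
      _ ≤ d ^ ((1 : ℝ) / 3) :=
          Real.rpow_le_rpow (by positivity) (by norm_num; exact hd) (by norm_num)
  have h3 : (d ^ ((1 : ℝ) / 3)) ^ 3 = d := by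
    rw [← Real.rpow_natCast, ← Real.rpow_mul hd0]; norm_num
  have h2 : d ^ ((2 : ℝ) / 3) = (d ^ ((1 : ℝ) / 3)) ^ 2 := by
    rw [← Real.rpow_natCast, ← Real.rpow_mul hd0]; norm_num
  have hbound := abs_gfun_cube_sub_le ht
  rw [h3, ← h2, ← Real.rpow_neg hd0] at hbound
  rw [Real.norm_eq_abs, Real.norm_of_nonneg (by positivity)]
  exact hbound
end

section
/- Let φ = (1+√5)/2, let d ≥ 1 and ε ≥ 0 be reals, set μ* = 1 − 1/φ = (3−√5)/2, and let T1, T2, T3, C, A, X be nonnegative reals satisfying T1 + μ*·T2 ≤ C, μ*·T2 + (1−μ*)·T3 ≤ d·A, C ≤ (1+ε)·X, and A ≤ (1+ε)·X. Then T1 + T2 + T3 ≤ (1+ε)·(φd + 1)·X. (The key combination step in Theorem 3: for series-parallel graphs or trees, where the FPTAS guarantees max(A, C) ≤ (1+ε)·T_opt, the algorithm achieves ratio (1+ε)(1.619d + 1).) -/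
/-!
With `φ = (1 + √5) / 2` and `μ = (3 - √5) / 2`, the relation `φ² = φ + 1` gives `φ * μ = φ - 1`,
`φ * (1 - μ) = 1` and `μ + φ - 1 = 1`. Hence `T1 + T2 + T3` is exactly the left side of `h1` plus
`φ` times the left side of `h2`, so it is at most `C + φ * d * A`; the bounds on `C` and `A` finish.
-/

/-- **key combination step in Theorem 3, SP graphs or trees.**
Let `φ = (1+√5)/2` be the golden ratio, let `d ≥ 1` and `ε ≥ 0` be reals, set
`μ* = 1 - 1/φ = (3-√5)/2`, and let `T1, T2, T3, C, A, X` be nonnegative reals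
satisfying `T1 + μ* T2 ≤ C`, `μ* T2 + (1-μ*) T3 ≤ d A`, `C ≤ (1+ε) X` and
`A ≤ (1+ε) X`.  Then `T1 + T2 + T3 ≤ (1+ε) (φ d + 1) X`. -/
theorem theorem3_combination
    (d ε T1 T2 T3 C A X : ℝ)
    (hd : 1 ≤ d) (hε : 0 ≤ ε)
    (hT1 : 0 ≤ T1) (hT2 : 0 ≤ T2) (hT3 : 0 ≤ T3)
    (hC : 0 ≤ C) (hA : 0 ≤ A) (hX : 0 ≤ X)
    (h1 : T1 + ((3 - Real.sqrt 5) / 2) * T2 ≤ C)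
    (h2 : ((3 - Real.sqrt 5) / 2) * T2 + (1 - (3 - Real.sqrt 5) / 2) * T3 ≤ d * A)
    (h3 : C ≤ (1 + ε) * X)
    (h4 : A ≤ (1 + ε) * X) :
    T1 + T2 + T3 ≤ (1 + ε) * (((1 + Real.sqrt 5) / 2) * d + 1) * X := by
  have h5 : Real.sqrt 5 * Real.sqrt 5 = 5 := Real.mul_self_sqrt (by norm_num)
  have hφ : 0 ≤ (1 + Real.sqrt 5) / 2 := by positivity
  have hA' : d * A ≤ d * ((1 + ε) * X) := mul_le_mul_of_nonneg_left h4 (by linarith)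
  calc T1 + T2 + T3
      = (T1 + (3 - Real.sqrt 5) / 2 * T2) + (1 + Real.sqrt 5) / 2 *
          ((3 - Real.sqrt 5) / 2 * T2 + (1 - (3 - Real.sqrt 5) / 2) * T3) := by
        linear_combination (T2 / 4 - T3 / 4) * h5
    _ ≤ (1 + ε) * X + (1 + Real.sqrt 5) / 2 * (d * ((1 + ε) * X)) :=
        add_le_add (h1.trans h3) (mul_le_mul_of_nonneg_left (h2.trans hA') hφ)
    _ = (1 + ε) * (((1 + Real.sqrt 5) / 2) * d + 1) * X := by ring
end

section
/- Let d ≥ 4 and ε ≥ 0 be reals, set μ* = 1/(√(d−1)+1), and let T1, T2, T3, C, A, X be nonnegative reals satisfying T1 + μ*·T2 ≤ C, μ*·T2 + (1−μ*)·T3 ≤ d·A, C ≤ (1+ε)·X, and A ≤ (1+ε)·X. Then μ* ≤ (3−√5)/2, 1/μ* + (d−1)/(1−μ*) = d + 2√(d−1), and T1 + T2 + T3 ≤ (1+ε)·(d + 2√(d−1))·X. (The key combination step in Theorem 4: for series-parallel graphs or trees with d ≥ 4 resource types, the algorithm achieves ratio (1+ε)(d + 2√(d−1)).) -/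
/-!
Write `s = √(d-1)`, so that `μ* = 1/(s+1)`, `1 - μ* = s/(s+1)` and `d + 2s = (s+1)²`.
With `Y = (1+ε) X` the two constraints become `(s+1) T1 + T2 ≤ (s+1) Y` and
`T2 + s T3 ≤ (s+1) (s²+1) Y`. Adding `s-1` times the first to the second gives
`(s²-1) T1 + s T2 + s T3 ≤ s (s+1)² Y`, and `s ≤ s²-1` because `s ≥ √3` exceeds the
golden ratio. The same lower bound on `s` gives `μ* ≤ (3-√5)/2`.
-/

/-- **key combination step in Theorem 4, SP graphs or trees, d ≥ 4.**
Let `d ≥ 4` and `ε ≥ 0` be reals, set `μ* = 1/(√(d-1)+1)`, and let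
`T1, T2, T3, C, A, X` be nonnegative reals satisfying `T1 + μ* T2 ≤ C`,
`μ* T2 + (1-μ*) T3 ≤ d A`, `C ≤ (1+ε) X` and `A ≤ (1+ε) X`.  Then
`μ* ≤ (3-√5)/2`, `1/μ* + (d-1)/(1-μ*) = d + 2√(d-1)`, and
`T1 + T2 + T3 ≤ (1+ε) (d + 2√(d-1)) X`. -/
theorem theorem4_combination
    (d ε T1 T2 T3 C A X : ℝ)
    (hd : 4 ≤ d) (hε : 0 ≤ ε)
    (hT1 : 0 ≤ T1) (hT2 : 0 ≤ T2) (hT3 : 0 ≤ T3)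
    (hC : 0 ≤ C) (hA : 0 ≤ A) (hX : 0 ≤ X)
    (h1 : T1 + (1 / (Real.sqrt (d - 1) + 1)) * T2 ≤ C)
    (h2 : (1 / (Real.sqrt (d - 1) + 1)) * T2
        + (1 - 1 / (Real.sqrt (d - 1) + 1)) * T3 ≤ d * A)
    (h3 : C ≤ (1 + ε) * X)
    (h4 : A ≤ (1 + ε) * X) :
    1 / (Real.sqrt (d - 1) + 1) ≤ (3 - Real.sqrt 5) / 2 ∧
    1 / (1 / (Real.sqrt (d - 1) + 1)) + (d - 1) / (1 - 1 / (Real.sqrt (d - 1) + 1))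
      = d + 2 * Real.sqrt (d - 1) ∧
    T1 + T2 + T3 ≤ (1 + ε) * (d + 2 * Real.sqrt (d - 1)) * X := by
  obtain ⟨s, hs⟩ : ∃ s, s = Real.sqrt (d - 1) := ⟨_, rfl⟩
  rw [← hs] at h1 h2 ⊢
  have hsd : d = s ^ 2 + 1 := by
    rw [hs, Real.sq_sqrt (by linarith)]; ring
  -- a rational number between the golden ratio and `√3`
  have hs17 : 17 / 10 ≤ s := by
    rw [hs]; exact Real.le_sqrt_of_sq_le (by linarith)
  have h5 : Real.sqrt 5 ≤ 9 / 4 := Real.sqrt_le_iff.mpr (by norm_num)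
  have hs0 : 0 < s := by linarith
  have hs1 : 0 < s + 1 := by linarith
  have hmu : 1 - 1 / (s + 1) = s / (s + 1) := by field_simp; ring
  rw [hmu] at h2 ⊢
  refine ⟨?_, ?_, ?_⟩
  · rw [div_le_iff₀ hs1]
    nlinarith
  · rw [hsd]
    field_simp
    ring
  · obtain ⟨Y, hY⟩ : ∃ Y, Y = (1 + ε) * X := ⟨_, rfl⟩
    rw [← hY] at h3 h4
    have e1 : (s + 1) * T1 + T2 ≤ (s + 1) * Y := by
      have h := mul_le_mul_of_nonneg_left (h1.trans h3) hs1.le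
      have e : (s + 1) * (T1 + 1 / (s + 1) * T2) = (s + 1) * T1 + T2 := by field_simp
      rwa [e] at h
    have e2 : T2 + s * T3 ≤ (s + 1) * (d * Y) := by
      have h := mul_le_mul_of_nonneg_left
        (h2.trans (mul_le_mul_of_nonneg_left h4 (by linarith : 0 ≤ d))) hs1.le
      have e : (s + 1) * (1 / (s + 1) * T2 + s / (s + 1) * T3) = T2 + s * T3 := by
        field_simp
      rwa [e] at h
    have e3 := mul_le_mul_of_nonneg_left e1 (by linarith : 0 ≤ s - 1)
    have e4 : 0 ≤ (s ^ 2 - 1 - s) * T1 := mul_nonneg (by nlinarith) hT1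
    have goal_eq : (1 + ε) * (d + 2 * s) * X = (s + 1) ^ 2 * Y := by
      rw [hY, hsd]; ring
    rw [goal_eq]
    rw [hsd] at e2
    refine le_of_mul_le_mul_left ?_ hs0
    linarith
end

section
/- Consider a schedule of n ≥ 1 independent jobs with makespan T = max_j (s_j + t_j), together with, for each job j, an initial allocation p'_j ∈ ℕ^d and a number t'_j > 0 such that: p_j^{(i)} = min(p'^{(i)}_j, ⌈μ·P^{(i)}⌉) for all i and j; μ·t_j ≤ t'_j for all j; and t_j = t'_j whenever p_j = p'_j. Suppose the schedule is greedy: for every job j and every time τ with 0 ≤ τ < s_j, there exists a resource type i with U^{(i)}(τ) + p_j^{(i)} > P^{(i)}. Let C' = max_j t'_j. Then: if S1 = ∅, then μ·T2 ≤ C'; and if S1 ≠ ∅, then T1 + T2 ≤ C'. (Lemma 9: modified critical-path bound for independent jobs.) -/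
/-!
A *light* time (in `S1 ∪ S2`) has every utilization at most `⌈(1-μ) P i⌉ - 1`, while no job uses more
than `⌈μ P i⌉`. Since `⌈(1-μ) P⌉ + ⌈μ P⌉ ≤ P + 1`, every job would still fit at a light time, so by
greediness no job starts after it (`start_le_of_light`). Let `j` be a job that finishes at the
makespan `T`. Then all light times lie in `[s j, T)`, an interval of length `t j`, and
`μ * t j ≤ t' j ≤ C'`. If moreover `S1` contains a time `τ`, then `j` runs at `τ`, so `p j i` is below
the cap `⌈μ P i⌉` for every `i`; hence the allocation of `j` was not adjusted and `t j = t' j ≤ C'`.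
-/

open MeasureTheory

theorem ceil_mul_add_ceil_le (P : ℕ) (μ : ℝ) (hμ0 : 0 < μ) (hμ1 : μ < 1) :
    ⌈(1 - μ) * (P : ℝ)⌉₊ + ⌈μ * (P : ℝ)⌉₊ ≤ P + 1 := by
  have hP : (0 : ℝ) ≤ P := Nat.cast_nonneg P
  have h1 := Nat.ceil_lt_add_one (mul_nonneg (sub_nonneg.2 hμ1.le) hP)
  have h2 := Nat.ceil_lt_add_one (mul_nonneg hμ0.le hP)
  have h : ((⌈(1 - μ) * (P : ℝ)⌉₊ + ⌈μ * (P : ℝ)⌉₊ : ℕ) : ℝ) < ((P + 2 : ℕ) : ℝ) := by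
    push_cast
    linarith
  have h' := Nat.cast_lt.1 h
  omega

/-- At a light time every job of a greedy schedule has already started, because each job would fit
into the remaining resources. -/
theorem start_le_of_light {d n : ℕ} {P : Fin d → ℕ} {s t : Fin n → ℝ}
    {p : Fin n → Fin d → ℕ} {μ : ℝ} (hμ0 : 0 < μ) (hμ1 : μ < 1)
    (hcap : ∀ j i, p j i ≤ ⌈μ * (P i : ℝ)⌉₊)
    (hgreedy : ∀ (j : Fin n) (τ : ℝ), 0 ≤ τ → τ < s j → ∃ i, P i < util s t p i τ + p j i)
    {τ : ℝ} (hτ : 0 ≤ τ) (hlight : ∀ i, util s t p i τ < ⌈(1 - μ) * (P i : ℝ)⌉₊) (j : Fin n) :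
    s j ≤ τ := by
  by_contra! h
  obtain ⟨i, hi⟩ := hgreedy j τ hτ h
  have h1 := ceil_mul_add_ceil_le (P i) μ hμ0 hμ1
  have h2 := hcap j i
  have h3 := hlight i
  omega

/-- **Lemma 9: modified critical-path bound for independent jobs.**
Consider a schedule of `n ≥ 1` independent jobs (start times `s j ≥ 0`, durations
`t j > 0`, allocations `p j`) with makespan `T = max_j (s j + t j)`, together with
initial allocations `p' j` and numbers `t' j > 0` such that
`p j i = min (p' j i) ⌈μ P i⌉` for all `i, j`, `μ * t j ≤ t' j` for all `j`, and
`t j = t' j` whenever `p j = p' j`.  Suppose the schedule is greedy: for every job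
`j` and every time `τ` with `0 ≤ τ < s j`, some resource type `i` has
`U i τ + p j i > P i`.  Let `C' = max_j t' j`.  Then: if `S1 = ∅` then
`μ T2 ≤ C'`, and if `S1 ≠ ∅` then `T1 + T2 ≤ C'` (with `T1, T2` the Lebesgue
measures of `S1, S2`). -/
theorem modified_critical_path_bound
    (d n : ℕ) (hd : 0 < d) (hn : 0 < n)
    (P : Fin d → ℕ) (hP : ∀ i, 1 ≤ P i)
    (s t : Fin n → ℝ) (p : Fin n → Fin d → ℕ)
    (hs : ∀ j, 0 ≤ s j) (ht : ∀ j, 0 < t j)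
    (μ : ℝ) (hμ0 : 0 < μ) (hμ2 : μ < 1 / 2)
    (T : ℝ)
    (hT : T = Finset.univ.sup' ⟨⟨0, hn⟩, Finset.mem_univ _⟩ (fun j => s j + t j))
    (p' : Fin n → Fin d → ℕ) (t' : Fin n → ℝ) (ht' : ∀ j, 0 < t' j)
    (hadj : ∀ j i, p j i = min (p' j i) ⌈μ * (P i : ℝ)⌉₊)
    (htb : ∀ j, μ * t j ≤ t' j)
    (hunadj : ∀ j, p j = p' j → t j = t' j)
    (hgreedy : ∀ (j : Fin n) (τ : ℝ), 0 ≤ τ → τ < s j →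
      ∃ i, P i < util s t p i τ + p j i)
    (Cp : ℝ) (hCp : Cp = Finset.univ.sup' ⟨⟨0, hn⟩, Finset.mem_univ _⟩ t') :
    (S1set P s t p μ T = ∅ → μ * (volume (S2set P s t p μ T)).toReal ≤ Cp) ∧
    (S1set P s t p μ T ≠ ∅ →
      (volume (S1set P s t p μ T)).toReal + (volume (S2set P s t p μ T)).toReal
        ≤ Cp) := by
  obtain ⟨j, -, hj⟩ := Finset.exists_mem_eq_sup' ⟨⟨0, hn⟩, Finset.mem_univ _⟩
    (fun j : Fin n => s j + t j)
  have hTj : T = s j + t j := hT.trans hj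
  have hCj : t' j ≤ Cp := hCp ▸ Finset.le_sup' t' (Finset.mem_univ j)
  have hcap : ∀ j i, p j i ≤ ⌈μ * (P i : ℝ)⌉₊ := fun j i => by
    rw [hadj]
    exact min_le_right _ _
  have hμ1 : μ < 1 := by linarith
  have hlight1 : ∀ τ ∈ S1set P s t p μ T, s j ≤ τ := fun τ hτ =>
    start_le_of_light hμ0 hμ1 hcap hgreedy hτ.1 (fun i => (hτ.2.2 i).trans_le
      (Nat.ceil_mono (mul_le_mul_of_nonneg_right (by linarith) (Nat.cast_nonneg _)))) j
  have hsub1 : S1set P s t p μ T ⊆ Set.Ico (s j) (s j + t j) := fun τ hτ =>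
    ⟨hlight1 τ hτ, hTj ▸ hτ.2.1⟩
  have hsub2 : S2set P s t p μ T ⊆ Set.Ico (s j) (s j + t j) := fun τ hτ =>
    ⟨start_le_of_light hμ0 hμ1 hcap hgreedy hτ.1 hτ.2.2.2 j, hTj ▸ hτ.2.1⟩
  have hvol : volume.real (Set.Ico (s j) (s j + t j)) = t j := by
    rw [Real.volume_real_Ico_of_le (by linarith [ht j])]
    ring
  have hfin : volume (Set.Ico (s j) (s j + t j)) ≠ ⊤ := measure_Ico_lt_top.ne
  constructor
  · intro _
    have h : volume.real (S2set P s t p μ T) ≤ t j := hvol ▸ measureReal_mono hsub2 hfin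
    exact (mul_le_mul_of_nonneg_left h hμ0.le).trans ((htb j).trans hCj)
  · intro hne
    obtain ⟨τ, hτ⟩ := Set.nonempty_iff_ne_empty.2 hne
    have hpp : p j = p' j := by
      funext i
      have hle : p j i ≤ util s t p i τ := by
        unfold util
        exact Finset.single_le_sum (f := fun k => p k i) (fun _ _ => Nat.zero_le _)
          (Finset.mem_filter.2 ⟨Finset.mem_univ j, hsub1 hτ⟩)
      have h1 := hτ.2.2 i
      have h2 := hadj j i
      omega
    have hdisj : Disjoint (S2set P s t p μ T) (S1set P s t p μ T) := by
      rw [Set.disjoint_left]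
      rintro x ⟨-, -, ⟨k, hk⟩, -⟩ hx
      exact absurd (hx.2.2 k) (not_lt.2 hk)
    have h := measureReal_union (μ := volume) hdisj (measurableSet_S1set P s t p μ T)
      (measure_ne_top_of_subset hsub2 hfin) (measure_ne_top_of_subset hsub1 hfin)
    have h' : volume.real (S2set P s t p μ T ∪ S1set P s t p μ T) ≤ t j :=
      hvol ▸ measureReal_mono (Set.union_subset hsub2 hsub1) hfin
    have htj := hunadj j hpp
    change volume.real (S1set P s t p μ T) + volume.real (S2set P s t p μ T) ≤ Cp
    linarith
end
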